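/- arXiv:2412.20566 — 3 statements merged into one kernel-verified Lean document; each statement's English description precedes it below -/
import Mathlib

section
/- Let B be a bivector in ℝ_{p,q,r} and v a vector. Setting w := B × v (= B · v), one has for every j ≥ 1 that W_j · v = W_{j−1} ∧ w, i.e. ⟨W_j v⟩_{2j−1} = ⟨W_{j−1} w⟩_{2j−1}, where W_0 := 1. -/
/-! Common setup: the real geometric algebra `ℝ_{p,q,r}`, grade projections `⟨·⟩_ℓ`,
the commutator product `×`, the wedge powers `W_j`, the outer exponential and outer
trigonometric functions, the characteristic polynomial data `M_μ`, and the
complexification `ℂ ⊗ ℝ_{p,q,r}`. -/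

noncomputable section

open CliffordAlgebra TensorProduct

/-- The diagonal quadratic form of signature `(p,q,r)` on `ℝⁿ`, `n = p+q+r`:
`p` basis vectors of square `+1`, `q` of square `-1`, `r` of square `0`.
`ℝ_{p,q,r} := CliffordAlgebra (sigQ p q r)`. -/
def sigQ (p q r : ℕ) : QuadraticForm ℝ (Fin (p + q + r) → ℝ) :=
  QuadraticMap.weightedSumSquares ℝ
    (fun i : Fin (p + q + r) => if (i : ℕ) < p then (1 : ℝ) else if (i : ℕ) < p + q then -1 else 0)

variable {K : Type*} [Field K] [CharZero K] {M : Type*} [AddCommGroup M] [Module K M]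

/-- The grade-`ℓ` component `⟨x⟩_ℓ` of an element of a Clifford algebra, obtained by
transporting the grading of the exterior algebra along `CliffordAlgebra.equivExterior`. -/
def gradeProj (Q : QuadraticForm K M) (ℓ : ℕ) (x : CliffordAlgebra Q) : CliffordAlgebra Q :=
  letI : Invertible (2 : K) := invertibleOfNonzero two_ne_zero
  (equivExterior Q).symm
    (DirectSum.decompose (fun n : ℕ => ⋀[K]^n M) (equivExterior Q x) ℓ : ExteriorAlgebra K M)

/-- `x` is homogeneous of grade `ℓ`; in particular `IsGrade Q 2 B` says `B` is a bivector. -/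
def IsGrade (Q : QuadraticForm K M) (ℓ : ℕ) (x : CliffordAlgebra Q) : Prop :=
  gradeProj Q ℓ x = x

/-- The commutator product `x × y := (xy - yx)/2`. -/
def cprod {Q : QuadraticForm K M} (x y : CliffordAlgebra Q) : CliffordAlgebra Q :=
  (2 : K)⁻¹ • (x * y - y * x)

/-- `W_j := (1/j!) ⟨B^j⟩_{2j}`, the normalized `j`-fold wedge power of `B`. -/
def Wj (Q : QuadraticForm K M) (B : CliffordAlgebra Q) (j : ℕ) : CliffordAlgebra Q :=
  ((j.factorial : K)⁻¹) • gradeProj Q (2 * j) (B ^ j)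

/-- `B` has effective dimension `2k`: `k` is the largest integer with `W_k ≠ 0`. -/
def HasEffDim (Q : QuadraticForm K M) (B : CliffordAlgebra Q) (k : ℕ) : Prop :=
  Wj Q B k ≠ 0 ∧ ∀ j, k < j → Wj Q B j = 0

/-- The outer exponential `Λ^B = Σ_{j≥0} W_j`; `n` is any bound beyond which all the `W_j`
vanish (e.g. the dimension of the underlying space), so the sum is complete. -/
def outerExp (Q : QuadraticForm K M) (n : ℕ) (B : CliffordAlgebra Q) : CliffordAlgebra Q :=
  ∑ j ∈ Finset.range (n + 1), Wj Q B j

/-- The outer cosine `co∧(B) := (Λ^B + Λ^{-B})/2`. -/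
def coW (Q : QuadraticForm K M) (n : ℕ) (B : CliffordAlgebra Q) : CliffordAlgebra Q :=
  (2 : K)⁻¹ • (outerExp Q n B + outerExp Q n (-B))

/-- The outer sine `si∧(B) := (Λ^B - Λ^{-B})/2`. -/
def siW (Q : QuadraticForm K M) (n : ℕ) (B : CliffordAlgebra Q) : CliffordAlgebra Q :=
  (2 : K)⁻¹ • (outerExp Q n B - outerExp Q n (-B))

/-- `M_μ := Σ_{j=0}^k (-μ)^{k-j} W_j`; the characteristic polynomial of `B` is
`P_{2k}(μ) = M_μ * reverse M_μ`. -/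
def Mpoly (Q : QuadraticForm K M) (B : CliffordAlgebra Q) (k : ℕ) (μ : K) : CliffordAlgebra Q :=
  ∑ j ∈ Finset.range (k + 1), (-μ) ^ (k - j) • Wj Q B j

/-- The wedge (outer) product, `X ∧ Y := ⟨XY⟩_{i+j}` on homogeneous elements of grades `i`, `j`,
extended bilinearly; `n` bounds the occurring grades. -/
def wedgeProd (Q : QuadraticForm K M) (n : ℕ) (x y : CliffordAlgebra Q) : CliffordAlgebra Q :=
  ∑ i ∈ Finset.range (n + 1), ∑ j ∈ Finset.range (n + 1),
    gradeProj Q (i + j) (gradeProj Q i x * gradeProj Q j y)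

/-- The dot product of two vectors, `u · v = ⟨uv⟩₀ = polar(Q)(u,v)/2`, as a scalar. -/
def vdot (Q : QuadraticForm K M) (u v : M) : K := (2 : K)⁻¹ * QuadraticMap.polar Q u v

/-- The complexified quadratic form of signature `(p,q,r)`. -/
def sigQc (p q r : ℕ) : QuadraticForm ℂ (ℂ ⊗[ℝ] (Fin (p + q + r) → ℝ)) :=
  letI : Invertible (2 : ℝ) := invertibleOfNonzero two_ne_zero
  (sigQ p q r).baseChange ℂ

/-- The canonical embedding of `ℝ_{p,q,r}` into its complexification `ℂ ⊗ ℝ_{p,q,r}`. -/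
def toC (p q r : ℕ) (x : CliffordAlgebra (sigQ p q r)) : CliffordAlgebra (sigQc p q r) :=
  letI : Invertible (2 : ℝ) := invertibleOfNonzero two_ne_zero
  ofBaseChange ℂ (sigQ p q r) ((1 : ℂ) ⊗ₜ x)

/-- `v` is an eigenvector of the bivector `B` with eigenvalue `μ`: `v ≠ 0` and `B × v = μ v`. -/
def IsEigen (Q : QuadraticForm K M) (B : CliffordAlgebra Q) (μ : K) (v : M) : Prop :=
  v ≠ 0 ∧ cprod B (ι Q v) = μ • ι Q v

end

/-!
Identify `CliffordAlgebra Q` with the exterior algebra as a module, and let `v⨼` be the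
contraction by the bilinear form of `-Q`. A Clifford product differs from the exterior product only
by contractions, which lower the degree, so its top component is the exterior product; in
particular `W_j` becomes `b ^ j / j!`, where `b` is the image of `B`. Clifford multiplication of an
even `x` by `v` is `x ∧ v + v⨼x` on the right and `v ∧ x - v⨼x` on the left; as `b ∧ v = v ∧ b`,
the image of `B × v` is `v⨼b`. Since `b` is even and commutes with vectors, the antiderivation `v⨼`
obeys the ordinary power rule `v⨼(b ^ j / j!) = b ^ (j - 1) / (j - 1)! ∧ (v⨼b)`, which is the claim.
-/

namespace GeometricAlgebra

open CliffordAlgebra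

variable {R M : Type*} [CommRing R] [AddCommGroup M] [Module R M]

local infixl:70 "⨼" => CliffordAlgebra.contractLeft

section Contraction

variable {Q Q' : QuadraticForm R M}

theorem involute_contractLeft (d : Module.Dual R M) (x : CliffordAlgebra Q) :
    involute (d⨼x) = -(d⨼involute x) := by
  induction x using CliffordAlgebra.left_induction with
  | algebraMap r => simp
  | add x y hx hy => simp only [map_add, hx, hy, neg_add]
  | ι_mul x v hx =>
    simp only [map_mul, involute_ι, neg_mul, map_neg, contractLeft_ι_mul, hx, map_sub, map_smul,
      mul_neg, neg_neg]

theorem contractLeft_mul (d : Module.Dual R M) (x y : CliffordAlgebra Q) :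
    d⨼(x * y) = d⨼x * y + involute x * (d⨼y) := by
  induction x using CliffordAlgebra.left_induction with
  | algebraMap r => simp [contractLeft_algebraMap_mul]
  | add x x' hx hx' => simp only [add_mul, map_add, hx, hx']; abel
  | ι_mul x v hx =>
    simp only [mul_assoc, contractLeft_ι_mul, hx, map_mul, involute_ι, sub_mul, mul_add,
      smul_mul_assoc, neg_mul]
    abel

theorem contractLeft_pow_succ (d : Module.Dual R M) {x : CliffordAlgebra Q} (hx : involute x = x)
    (hd : Commute x (d⨼x)) (n : ℕ) : d⨼(x ^ (n + 1)) = (n + 1) • (x ^ n * (d⨼x)) := by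
  induction n with
  | zero => simp
  | succ n ih =>
    rw [pow_succ', contractLeft_mul, hx, ih, ← (hd.pow_left (n + 1)).eq, mul_smul_comm,
      ← mul_assoc, ← pow_succ', succ_nsmul' _ (n + 1)]

theorem changeForm_mul_ι {B : LinearMap.BilinForm R M} (h : B.toQuadraticMap = Q' - Q)
    (x : CliffordAlgebra Q) (v : M) :
    changeForm h (x * ι Q v) =
      changeForm h x * ι Q' v + LinearMap.flip B v⨼involute (changeForm h x) := by
  induction x using CliffordAlgebra.left_induction with
  | algebraMap r => simp [← Algebra.smul_def]
  | add x y hx hy => simp only [add_mul, map_add, hx, hy]; abel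
  | ι_mul x u hx =>
    rw [mul_assoc, changeForm_ι_mul, hx, changeForm_ι_mul]
    generalize changeForm h x = y
    simp only [map_add, map_sub, map_mul, involute_ι, involute_contractLeft, contractLeft_mul,
      contractLeft_ι, map_neg, contractLeft_comm (B u), LinearMap.flip_apply,
      sub_mul, mul_add, mul_assoc, neg_mul, ← Algebra.commutes]
    abel

end Contraction

section DegreeFiltration

/-- The degree filtration of the Clifford algebra: `degreeLE Q n` is spanned by the products of at
most `n` vectors. -/
def degreeLE (Q : QuadraticForm R M) (n : ℕ) : Submodule R (CliffordAlgebra Q) :=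
  (1 ⊔ LinearMap.range (ι Q)) ^ n

variable {Q Q' : QuadraticForm R M} {m n : ℕ} {x y : CliffordAlgebra Q}

theorem range_ι_pow_le_degreeLE (n : ℕ) : LinearMap.range (ι Q) ^ n ≤ degreeLE Q n :=
  pow_le_pow_left' le_sup_right n

theorem degreeLE_mono : Monotone (degreeLE Q) := fun _ _ => pow_le_pow_right' le_sup_left

theorem mul_mem_degreeLE (hx : x ∈ degreeLE Q m) (hy : y ∈ degreeLE Q n) :
    x * y ∈ degreeLE Q (m + n) := by
  rw [degreeLE, pow_add]
  exact Submodule.mul_mem_mul hx hy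

theorem ι_mul_mem_degreeLE (v : M) (hx : x ∈ degreeLE Q n) : ι Q v * x ∈ degreeLE Q (n + 1) := by
  rw [degreeLE, pow_succ']
  exact Submodule.mul_mem_mul (Submodule.mem_sup_right ⟨v, rfl⟩) hx

theorem pow_mem_degreeLE (hx : x ∈ degreeLE Q n) (k : ℕ) : x ^ k ∈ degreeLE Q (n * k) := by
  rw [degreeLE, pow_mul]
  exact Submodule.pow_mem_pow _ hx k

theorem one_mem_degreeLE_zero : (1 : CliffordAlgebra Q) ∈ degreeLE Q 0 := Submodule.one_le.mp le_rfl

@[elab_as_elim]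
theorem degreeLE_induction {motive : ∀ n x, x ∈ degreeLE Q n → Prop}
    (one : motive 0 1 one_mem_degreeLE_zero)
    (add : ∀ n x y hx hy, motive n x hx → motive n y hy → motive n (x + y) (add_mem hx hy))
    (smul : ∀ n (r : R) x hx, motive n x hx → motive n (r • x) (Submodule.smul_mem _ r hx))
    (succ : ∀ n x hx, motive n x hx → motive (n + 1) x (degreeLE_mono n.le_succ hx))
    (ι_mul : ∀ n v x hx, motive n x hx → motive (n + 1) (ι Q v * x) (ι_mul_mem_degreeLE v hx))
    (hx : x ∈ degreeLE Q n) : motive n x hx := by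
  induction hx using Submodule.pow_induction_on_left' with
  | algebraMap r => simpa only [Algebra.algebraMap_eq_smul_one] using smul 0 r 1 _ one
  | add x y n hx hy ihx ihy => exact add n x y hx hy ihx ihy
  | mem_mul s hs n x hx ih =>
    obtain ⟨_, hr, _, ⟨v, rfl⟩, rfl⟩ := Submodule.mem_sup.mp hs
    obtain ⟨r, rfl⟩ := Submodule.mem_one.mp hr
    simp only [add_mul, ← Algebra.smul_def]
    exact add _ _ _ _ _ (smul _ r x _ (succ n x hx ih)) (ι_mul n v x hx ih)

theorem contractLeft_mem_degreeLE (d : Module.Dual R M) (hx : x ∈ degreeLE Q n) :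
    d⨼x ∈ degreeLE Q n := by
  induction hx using degreeLE_induction with
  | one => simp
  | add n x y _ _ hx hy => simpa using add_mem hx hy
  | smul n r x _ hx => simpa using Submodule.smul_mem _ r hx
  | succ n x _ ih => exact degreeLE_mono n.le_succ ih
  | ι_mul n v x hx ih =>
    rw [contractLeft_ι_mul]
    exact sub_mem (Submodule.smul_mem _ _ (degreeLE_mono n.le_succ hx)) (ι_mul_mem_degreeLE v ih)

theorem changeForm_mem_degreeLE {B : LinearMap.BilinForm R M} (h : B.toQuadraticMap = Q' - Q)
    (hx : x ∈ degreeLE Q n) : changeForm h x ∈ degreeLE Q' n := by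
  induction hx using degreeLE_induction with
  | one => simpa using one_mem_degreeLE_zero
  | add n x y _ _ hx hy => simpa using add_mem hx hy
  | smul n r x _ hx => simpa using Submodule.smul_mem _ r hx
  | succ n x _ ih => exact degreeLE_mono n.le_succ ih
  | ι_mul n v x _ ih =>
    rw [changeForm_ι_mul]
    exact sub_mem (ι_mul_mem_degreeLE v ih)
      (degreeLE_mono n.le_succ (contractLeft_mem_degreeLE (B v) ih))

end DegreeFiltration

section ExteriorAlgebra

variable {m n : ℕ} {x y : ExteriorAlgebra R M}

/-- The projection of the exterior algebra onto its `n`-th exterior power. -/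
noncomputable def exteriorProj (R M : Type*) [CommRing R] [AddCommGroup M] [Module R M] (n : ℕ) :
    ExteriorAlgebra R M →ₗ[R] ExteriorAlgebra R M :=
  GradedAlgebra.proj (fun i : ℕ => ⋀[R]^i M) n

theorem exteriorProj_mem (n : ℕ) (x : ExteriorAlgebra R M) : exteriorProj R M n x ∈ ⋀[R]^n M :=
  (DirectSum.decompose (fun i : ℕ => ⋀[R]^i M) x n).2

theorem exteriorProj_of_mem (hx : x ∈ ⋀[R]^n M) : exteriorProj R M n x = x :=
  DirectSum.decompose_of_mem_same (fun i : ℕ => ⋀[R]^i M) hx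

theorem exteriorProj_of_mem_ne (hx : x ∈ ⋀[R]^m M) (hmn : m ≠ n) : exteriorProj R M n x = 0 :=
  DirectSum.decompose_of_mem_ne (fun i : ℕ => ⋀[R]^i M) hx hmn

theorem ι_mem_exteriorPower_one (v : M) : ExteriorAlgebra.ι R v ∈ ⋀[R]^1 M := by
  rw [ExteriorAlgebra.exteriorPower, pow_one]
  exact ⟨v, rfl⟩

theorem algebraMap_mem_exteriorPower_zero (r : R) :
    algebraMap R (ExteriorAlgebra R M) r ∈ ⋀[R]^0 M :=
  SetLike.algebraMap_mem_graded (fun i : ℕ => ⋀[R]^i M) r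

theorem exteriorProj_succ_ι_mul (n : ℕ) (v : M) (x : ExteriorAlgebra R M) :
    exteriorProj R M (n + 1) (ExteriorAlgebra.ι R v * x) =
      ExteriorAlgebra.ι R v * exteriorProj R M n x := by
  rw [add_comm]
  exact DirectSum.coe_decompose_mul_add_of_left_mem (fun i : ℕ => ⋀[R]^i M)
    (ι_mem_exteriorPower_one v)

theorem exteriorProj_zero_ι_mul (v : M) (x : ExteriorAlgebra R M) :
    exteriorProj R M 0 (ExteriorAlgebra.ι R v * x) = 0 :=
  DirectSum.coe_decompose_mul_of_left_mem_of_not_le (fun i : ℕ => ⋀[R]^i M)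
    (ι_mem_exteriorPower_one v) (by simp)

theorem exteriorProj_contractLeft (d : Module.Dual R M) (n : ℕ) (x : ExteriorAlgebra R M) :
    exteriorProj R M n (d⨼x) = d⨼exteriorProj R M (n + 1) x := by
  induction x using CliffordAlgebra.left_induction generalizing n with
  | algebraMap r =>
    rw [contractLeft_algebraMap, map_zero,
      exteriorProj_of_mem_ne (algebraMap_mem_exteriorPower_zero r) n.succ_ne_zero.symm, map_zero]
  | add x y hx hy => simp only [map_add, hx, hy]
  | ι_mul x v hx =>
    rw [contractLeft_ι_mul, map_sub, map_smul, exteriorProj_succ_ι_mul, contractLeft_ι_mul]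
    cases n with
    | zero =>
      obtain ⟨r, hr⟩ := Submodule.mem_one.mp (exteriorProj_mem 0 x)
      rw [exteriorProj_zero_ι_mul, ← hr, contractLeft_algebraMap, mul_zero]
    | succ n => rw [exteriorProj_succ_ι_mul, hx]

theorem contractLeft_mem_exteriorPower (d : Module.Dual R M) (hx : x ∈ ⋀[R]^(n + 1) M) :
    d⨼x ∈ ⋀[R]^n M := by
  rw [← exteriorProj_of_mem hx, ← exteriorProj_contractLeft]
  exact exteriorProj_mem n _

theorem involute_mem_exteriorPower (hx : x ∈ ⋀[R]^n M) : involute x ∈ ⋀[R]^n M := by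
  have hmap := Submodule.mem_map_of_mem (f := involute.toLinearMap) hx
  rwa [ExteriorAlgebra.exteriorPower, Submodule.map_pow, ExteriorAlgebra.ι, ι_range_map_involute]
    at hmap

theorem exteriorProj_of_mem_degreeLE (hx : x ∈ degreeLE (0 : QuadraticForm R M) m) (hmn : m < n) :
    exteriorProj R M n x = 0 := by
  induction hx using degreeLE_induction generalizing n with
  | one => exact exteriorProj_of_mem_ne (SetLike.one_mem_graded _) hmn.ne
  | add m x y _ _ hx hy => rw [map_add, hx hmn, hy hmn, add_zero]
  | smul m r _ _ hx => rw [map_smul, hx hmn, smul_zero]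
  | succ m _ _ ih => exact ih (by lia)
  | ι_mul m v x _ ih =>
    obtain ⟨n, rfl⟩ := Nat.exists_eq_add_one_of_ne_zero (Nat.ne_zero_of_lt hmn)
    rw [exteriorProj_succ_ι_mul, ih (by lia), mul_zero]

theorem exteriorPower_le_evenOdd (n : ℕ) : ⋀[R]^n M ≤ evenOdd (0 : QuadraticForm R M) n :=
  le_iSup_of_le (⟨n, rfl⟩ : {k : ℕ // (k : ZMod 2) = n}) le_rfl

theorem ι_mul_eq_involute_mul_ι (v : M) (x : ExteriorAlgebra R M) :
    ExteriorAlgebra.ι R v * x = involute x * ExteriorAlgebra.ι R v := by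
  induction x using CliffordAlgebra.left_induction with
  | algebraMap r => rw [AlgHom.commutes, Algebra.commutes]
  | add x y hx hy => rw [mul_add, map_add, add_mul, hx, hy]
  | ι_mul x u hx =>
    rw [map_mul, involute_ι, mul_assoc, ← hx, ← mul_assoc, neg_mul, ← mul_assoc, ← neg_mul,
      eq_neg_of_add_eq_zero_left (ExteriorAlgebra.ι_add_mul_swap v u)]

theorem commute_ι_of_mem_even (hx : x ∈ evenOdd (0 : QuadraticForm R M) 0) (v : M) :
    Commute x (ExteriorAlgebra.ι R v) := by
  have h := ι_mul_eq_involute_mul_ι v x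
  rw [involute_eq_of_mem_even hx] at h
  exact h.symm

end ExteriorAlgebra

section LeadingTerm

variable {Q : QuadraticForm R M} {B : LinearMap.BilinForm R M} (h : B.toQuadraticMap = 0 - Q)
  {m n : ℕ} {x y : CliffordAlgebra Q}

theorem exteriorProj_changeForm_mul (hx : x ∈ degreeLE Q m) (hy : y ∈ degreeLE Q n) :
    exteriorProj R M (m + n) (changeForm h (x * y)) =
      exteriorProj R M m (changeForm h x) * exteriorProj R M n (changeForm h y) := by
  have vanish {k l : ℕ} {z : CliffordAlgebra Q} (hz : z ∈ degreeLE Q k) (hkl : k < l) :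
      exteriorProj R M l (changeForm h z) = 0 :=
    exteriorProj_of_mem_degreeLE (changeForm_mem_degreeLE h hz) hkl
  induction hx using degreeLE_induction with
  | one =>
    rw [zero_add, one_mul, changeForm_one, exteriorProj_of_mem (SetLike.one_mem_graded _), one_mul]
  | add m x x' _ _ hx hx' => simp only [add_mul, map_add, hx, hx']
  | smul m r x _ hx => simp only [smul_mul_assoc, map_smul, hx]
  | succ m x hx _ =>
    rw [vanish (mul_mem_degreeLE hx hy) (by lia), vanish hx (by lia), zero_mul]
  | ι_mul m v x hx ih =>
    rw [mul_assoc, add_right_comm]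
    -- Contraction lowers the degree, so the correction terms of `changeForm_ι_mul` are too low.
    simp only [changeForm_ι_mul, map_sub, exteriorProj_succ_ι_mul, exteriorProj_contractLeft, ih]
    rw [vanish (l := m + n + 1 + 1) (mul_mem_degreeLE hx hy) (by lia),
      vanish (l := m + 1 + 1) hx (by lia), map_zero, sub_zero, sub_zero, mul_assoc]

theorem exteriorProj_changeForm_pow (hx : x ∈ degreeLE Q n) (k : ℕ) :
    exteriorProj R M (n * k) (changeForm h (x ^ k)) = exteriorProj R M n (changeForm h x) ^ k := by
  induction k with
  | zero =>
    simp only [pow_zero, changeForm_one, mul_zero]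
    exact exteriorProj_of_mem (SetLike.one_mem_graded _)
  | succ k ih =>
    rw [pow_succ, mul_add_one, exteriorProj_changeForm_mul h (pow_mem_degreeLE hx k) hx, ih,
      pow_succ]

theorem mem_degreeLE_of_changeForm_mem_exteriorPower (hx : changeForm h x ∈ ⋀[R]^n M) :
    x ∈ degreeLE Q n := by
  rw [← (changeFormEquiv h).symm_apply_apply x]
  exact changeForm_mem_degreeLE (changeForm.neg_proof h) (range_ι_pow_le_degreeLE n hx)

end LeadingTerm

section Bivector

variable {K : Type*} [Field K] [CharZero K] [Module K M] {Q : QuadraticForm K M} {m n : ℕ}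
  {x y B : CliffordAlgebra Q}

/-- The symmetric bilinear form associated with `-Q`, which turns `Q` into the zero form. The
instance `Invertible 2` is chosen as in `gradeProj`. -/
noncomputable def negForm (Q : QuadraticForm K M) : LinearMap.BilinForm K M :=
  letI : Invertible (2 : K) := invertibleOfNonzero two_ne_zero
  QuadraticMap.associated (-Q)

theorem toQuadraticMap_negForm (Q : QuadraticForm K M) : (negForm Q).toQuadraticMap = 0 - Q :=
  letI : Invertible (2 : K) := invertibleOfNonzero two_ne_zero
  changeForm.associated_neg_proof

theorem flip_negForm (Q : QuadraticForm K M) : LinearMap.flip (negForm Q) = negForm Q :=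
  QuadraticMap.associated_flip K (-Q)

/-- The linear isomorphism with the exterior algebra along which `gradeProj Q` is defined. -/
noncomputable def toExterior (Q : QuadraticForm K M) :
    CliffordAlgebra Q ≃ₗ[K] ExteriorAlgebra K M :=
  changeFormEquiv (toQuadraticMap_negForm Q)

theorem toExterior_apply (x : CliffordAlgebra Q) :
    toExterior Q x = changeForm (toQuadraticMap_negForm Q) x := rfl

theorem toExterior_ι_mul (v : M) (x : CliffordAlgebra Q) :
    toExterior Q (ι Q v * x) =
      ExteriorAlgebra.ι K v * toExterior Q x - negForm Q v⨼toExterior Q x :=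
  changeForm_ι_mul (toQuadraticMap_negForm Q) v x

theorem toExterior_mul_ι (x : CliffordAlgebra Q) (v : M) :
    toExterior Q (x * ι Q v) =
      toExterior Q x * ExteriorAlgebra.ι K v + negForm Q v⨼involute (toExterior Q x) := by
  rw [toExterior_apply, changeForm_mul_ι, flip_negForm, toExterior_apply]

theorem toExterior_gradeProj (n : ℕ) (x : CliffordAlgebra Q) :
    toExterior Q (gradeProj Q n x) = exteriorProj K M n (toExterior Q x) :=
  (toExterior Q).apply_symm_apply _

theorem isGrade_iff_toExterior_mem : IsGrade Q n x ↔ toExterior Q x ∈ ⋀[K]^n M := by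
  rw [IsGrade, ← (toExterior Q).injective.eq_iff, toExterior_gradeProj]
  exact ⟨fun h => h ▸ exteriorProj_mem n _, exteriorProj_of_mem⟩

theorem mem_degreeLE_of_isGrade (hx : IsGrade Q n x) : x ∈ degreeLE Q n :=
  mem_degreeLE_of_changeForm_mem_exteriorPower (toQuadraticMap_negForm Q)
    (isGrade_iff_toExterior_mem.mp hx)

theorem toExterior_mem_even_of_isGrade (hx : IsGrade Q (2 * n) x) :
    toExterior Q x ∈ evenOdd (0 : QuadraticForm K M) 0 := by
  have := exteriorPower_le_evenOdd (2 * n) (isGrade_iff_toExterior_mem.mp hx)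
  rwa [ZMod.natCast_eq_zero_iff_even.mpr (even_two_mul n)] at this

theorem toExterior_gradeProj_add_mul (hx : IsGrade Q m x) (hy : IsGrade Q n y) :
    toExterior Q (gradeProj Q (m + n) (x * y)) = toExterior Q x * toExterior Q y := by
  rw [toExterior_gradeProj, toExterior_apply,
    exteriorProj_changeForm_mul _ (mem_degreeLE_of_isGrade hx) (mem_degreeLE_of_isGrade hy)]
  exact congrArg₂ _ (exteriorProj_of_mem (isGrade_iff_toExterior_mem.mp hx))
    (exteriorProj_of_mem (isGrade_iff_toExterior_mem.mp hy))

theorem toExterior_gradeProj_mul_ι (hx : IsGrade Q (n + 1) x) (v : M) :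
    toExterior Q (gradeProj Q n (x * ι Q v)) = negForm Q v⨼involute (toExterior Q x) := by
  have hx := isGrade_iff_toExterior_mem.mp hx
  have top : toExterior Q x * ExteriorAlgebra.ι K v ∈ ⋀[K]^(n + 1 + 1) M :=
    SetLike.mul_mem_graded hx (ι_mem_exteriorPower_one v)
  rw [toExterior_gradeProj, toExterior_mul_ι, map_add, exteriorProj_of_mem_ne top (by lia),
    zero_add, exteriorProj_of_mem
      (contractLeft_mem_exteriorPower (negForm Q v) (involute_mem_exteriorPower hx))]

theorem toExterior_Wj (hB : IsGrade Q 2 B) (j : ℕ) :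
    toExterior Q (Wj Q B j) = (j.factorial : K)⁻¹ • toExterior Q B ^ j := by
  rw [Wj, map_smul, toExterior_gradeProj, toExterior_apply,
    exteriorProj_changeForm_pow _ (mem_degreeLE_of_isGrade hB), ← toExterior_apply,
    exteriorProj_of_mem (isGrade_iff_toExterior_mem.mp hB)]

theorem isGrade_Wj (hB : IsGrade Q 2 B) (j : ℕ) : IsGrade Q (2 * j) (Wj Q B j) := by
  rw [isGrade_iff_toExterior_mem, toExterior_Wj hB, mul_comm]
  exact Submodule.smul_mem _ _ (SetLike.pow_mem_graded j (isGrade_iff_toExterior_mem.mp hB))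

theorem toExterior_cprod_ι (hB : IsGrade Q 2 B) (v : M) :
    toExterior Q (cprod B (ι Q v)) = negForm Q v⨼toExterior Q B := by
  have even := toExterior_mem_even_of_isGrade (n := 1) hB
  rw [cprod, map_smul, map_sub, toExterior_mul_ι, toExterior_ι_mul, involute_eq_of_mem_even even,
    (commute_ι_of_mem_even even v).eq, add_sub_sub_cancel, ← two_smul K, inv_smul_smul₀ two_ne_zero]

theorem isGrade_cprod_ι (hB : IsGrade Q 2 B) (v : M) : IsGrade Q 1 (cprod B (ι Q v)) := by
  rw [isGrade_iff_toExterior_mem, toExterior_cprod_ι hB]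
  exact contractLeft_mem_exteriorPower _ (isGrade_iff_toExterior_mem.mp hB)

theorem contractLeft_toExterior_Wj_succ (hB : IsGrade Q 2 B) (d : Module.Dual K M) (j : ℕ) :
    d⨼toExterior Q (Wj Q B (j + 1)) = toExterior Q (Wj Q B j) * (d⨼toExterior Q B) := by
  have hb := isGrade_iff_toExterior_mem.mp hB
  have even := toExterior_mem_even_of_isGrade (n := 1) hB
  have comm : Commute (toExterior Q B) (d⨼toExterior Q B) := by
    obtain ⟨u, hu⟩ := (pow_one (LinearMap.range (ExteriorAlgebra.ι K))).le
      (contractLeft_mem_exteriorPower d hb)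
    exact hu ▸ commute_ι_of_mem_even even u
  have factorial_inv : ((j + 1).factorial : K)⁻¹ * (j + 1 : ℕ) = (j.factorial : K)⁻¹ := by
    rw [Nat.factorial_succ, Nat.cast_mul, mul_inv_rev, mul_assoc,
      inv_mul_cancel₀ (Nat.cast_ne_zero.mpr j.succ_ne_zero), mul_one]
  rw [toExterior_Wj hB, toExterior_Wj hB, map_smul,
    contractLeft_pow_succ d (involute_eq_of_mem_even even) comm, ← Nat.cast_smul_eq_nsmul K,
    smul_smul, factorial_inv, smul_mul_assoc]

end Bivector

end GeometricAlgebra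

open CliffordAlgebra GeometricAlgebra in
theorem Wj_dot_vector_general {K M : Type*} [Field K] [CharZero K] [AddCommGroup M] [Module K M]
    (Q : QuadraticForm K M) (B : CliffordAlgebra Q) (hB : IsGrade Q 2 B) (v : M) (j : ℕ)
    (hj : 1 ≤ j) :
    gradeProj Q (2 * j - 1) (Wj Q B j * ι Q v) =
      gradeProj Q (2 * j - 1) (Wj Q B (j - 1) * cprod B (ι Q v)) := by
  obtain ⟨k, rfl⟩ := Nat.exists_eq_add_of_le' hj
  have even := toExterior_mem_even_of_isGrade (isGrade_Wj hB (k + 1))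
  apply (toExterior Q).injective
  calc toExterior Q (gradeProj Q (2 * k + 1) (Wj Q B (k + 1) * ι Q v))
      = contractLeft (negForm Q v) (toExterior Q (Wj Q B (k + 1))) := by
        rw [toExterior_gradeProj_mul_ι (n := 2 * k + 1) (isGrade_Wj hB (k + 1)),
          involute_eq_of_mem_even even]
    _ = toExterior Q (Wj Q B k) * toExterior Q (cprod B (ι Q v)) := by
        rw [contractLeft_toExterior_Wj_succ hB, toExterior_cprod_ι hB]
    _ = toExterior Q (gradeProj Q (2 * k + 1) (Wj Q B k * cprod B (ι Q v))) :=
        (toExterior_gradeProj_add_mul (isGrade_Wj hB k) (isGrade_cprod_ι hB v)).symm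

open CliffordAlgebra in
/-- for a bivector `B` and a vector `v`, with `w := B × v`, one has
`W_j · v = W_{j-1} ∧ w`, i.e. `⟨W_j v⟩_{2j-1} = ⟨W_{j-1} w⟩_{2j-1}`, for every `j ≥ 1`. -/
theorem Wj_dot_vector (p q r : ℕ) (B : CliffordAlgebra (sigQ p q r))
    (hB : IsGrade (sigQ p q r) 2 B) (v : Fin (p + q + r) → ℝ) (j : ℕ) (hj : 1 ≤ j) :
    gradeProj (sigQ p q r) (2 * j - 1) (Wj (sigQ p q r) B j * ι (sigQ p q r) v) =
      gradeProj (sigQ p q r) (2 * j - 1)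
        (Wj (sigQ p q r) B (j - 1) * cprod B (ι (sigQ p q r) v)) := by
  exact Wj_dot_vector_general (sigQ p q r) B hB v j hj
end

section
/- Let B be a bivector in ℝ_{p,q,r} with effective dimension 2k, and let ±μ₁, …, ±μ_k ∈ ℂ be the roots (with multiplicity) of its characteristic polynomial P_{2k}. Then for every index 1 ≤ j ≤ k one has ⟨W_j²⟩₀ = e_j(μ₁², …, μ_k²), where e_j denotes the elementary symmetric polynomial of degree j in k variables. -/
/-!
The wedge product of a vector `v` with a multivector `x` is `(v x + x̂ v) / 2`, where `x̂` is the
grade involution. Hence multivectors of grade `n` are sums of `n`-fold products of vectors, and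
reversal acts on them by the sign `(-1)^(n(n-1)/2)`. Multiplication by a vector lowers grades by at
most one, so `⟨x y⟩₀ = 0` whenever the grade of `y` exceeds that of `x`; by reversal, whenever `x`
and `y` have different grades. As `W_j` has grade `2j` and reversal acts on it by `(-1)^j`, only the
diagonal terms of `M_μ M̃_μ` have a scalar part:
`⟨M_μ M̃_μ⟩₀ = ∑ j, (-1)^j ⟨W_j²⟩₀ (μ²)^(k-j)`.
Comparing this with Vieta's formula for `∏ i, (μ² - μ_i²)` as polynomials in `μ²` gives the claim.
-/

section

open CliffordAlgebra

namespace GeometricAlgebra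

section Clifford

variable {R M : Type*} [CommRing R] [AddCommGroup M] [Module R M] {Q : QuadraticForm R M}

theorem involute_of_mem_range_ι_pow {n : ℕ} {x : CliffordAlgebra Q}
    (hx : x ∈ LinearMap.range (ι Q) ^ n) : involute x = (-1 : R) ^ n • x := by
  induction hx using Submodule.pow_induction_on_left' with
  | algebraMap r => simp
  | add x y n _ _ hx hy => rw [map_add, hx, hy, smul_add]
  | mem_mul _ hv n x _ hx =>
    obtain ⟨v, rfl⟩ := hv
    rw [map_mul, involute_ι, hx, pow_succ, mul_neg_one, neg_smul, neg_mul, mul_smul_comm]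

theorem ι_mul_mem_range_ι_pow_succ (v : M) {n : ℕ} {x : CliffordAlgebra Q}
    (hx : x ∈ LinearMap.range (ι Q) ^ n) : ι Q v * x ∈ LinearMap.range (ι Q) ^ (n + 1) :=
  pow_succ' (LinearMap.range (ι Q)) n ▸ Submodule.mul_mem_mul (LinearMap.mem_range_self _ v) hx

theorem ι_mul_contractLeft_mem_range_ι_pow (d : Module.Dual R M) {n : ℕ} {x : CliffordAlgebra Q}
    (hx : x ∈ LinearMap.range (ι Q) ^ n) (v : M) :
    ι Q v * contractLeft d x ∈ LinearMap.range (ι Q) ^ n := by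
  induction hx using Submodule.pow_induction_on_left' generalizing v with
  | algebraMap r => simp
  | add x y n _ _ hx hy => simpa only [map_add, mul_add] using add_mem (hx v) (hy v)
  | mem_mul _ hu n x hmem hx =>
    obtain ⟨u, rfl⟩ := hu
    rw [contractLeft_ι_mul, mul_sub, mul_smul_comm]
    exact sub_mem (Submodule.smul_mem _ _ (ι_mul_mem_range_ι_pow_succ v hmem))
      (ι_mul_mem_range_ι_pow_succ v (hx u))

theorem contractLeft_mem_range_ι_pow (d : Module.Dual R M) {n : ℕ} {x : CliffordAlgebra Q}
    (hx : x ∈ LinearMap.range (ι Q) ^ (n + 1)) :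
    contractLeft d x ∈ LinearMap.range (ι Q) ^ n := by
  rw [pow_succ'] at hx
  induction hx using Submodule.mul_induction_on' with
  | mem_mul_mem _ hv x hx =>
    obtain ⟨v, rfl⟩ := hv
    rw [contractLeft_ι_mul]
    exact sub_mem (Submodule.smul_mem _ _ hx) (ι_mul_contractLeft_mem_range_ι_pow d hx v)
  | add x _ y _ hx hy => rw [map_add]; exact add_mem hx hy

end Clifford

section Exterior

variable {R M : Type*} [CommRing R] [AddCommGroup M] [Module R M]

theorem algebraMapInv_eq_zero_of_mem_exteriorPower {n : ℕ} (hn : n ≠ 0) {Z : ExteriorAlgebra R M}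
    (hZ : Z ∈ ⋀[R]^n M) : ExteriorAlgebra.algebraMapInv Z = 0 := by
  induction hZ using Submodule.pow_induction_on_left' with
  | algebraMap r => exact absurd rfl hn
  | add Z Z' n _ _ hZ hZ' => rw [map_add, hZ hn, hZ' hn, add_zero]
  | mem_mul _ hv n Z _ _ =>
    obtain ⟨v, rfl⟩ := hv
    simp [ExteriorAlgebra.algebraMapInv]

theorem decompose_zero_eq_algebraMap (Z : ExteriorAlgebra R M) :
    (DirectSum.decompose (fun n : ℕ => ⋀[R]^n M) Z 0 : ExteriorAlgebra R M) =
      algebraMap R _ (ExteriorAlgebra.algebraMapInv Z) := by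
  change GradedRing.projZeroRingHom (fun n : ℕ => ⋀[R]^n M) Z = _
  induction Z using ExteriorAlgebra.induction with
  | algebraMap r =>
    rw [GradedRing.projZeroRingHom_apply, DirectSum.decompose_of_mem_same]
    · simp
    · exact SetLike.algebraMap_mem_graded (fun n : ℕ => ⋀[R]^n M) r
  | ι v =>
    have hv : ExteriorAlgebra.ι R v ∈ ⋀[R]^1 M := by
      rw [ExteriorAlgebra.exteriorPower, pow_one]
      exact LinearMap.mem_range_self _ v
    rw [GradedRing.projZeroRingHom_apply,
      DirectSum.decompose_of_mem_ne (fun n : ℕ => ⋀[R]^n M) hv one_ne_zero]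
    simp [ExteriorAlgebra.algebraMapInv]
  | mul Z Z' hZ hZ' => rw [map_mul, map_mul, map_mul, hZ, hZ']
  | add Z Z' hZ hZ' => rw [map_add, map_add, map_add, hZ, hZ']

end Exterior

section EquivExterior

variable {R M : Type*} [CommRing R] [Invertible (2 : R)] [AddCommGroup M] [Module R M]
  (Q : QuadraticForm R M)

theorem equivExterior_algebraMap (r : R) :
    equivExterior Q (algebraMap R _ r) = algebraMap R _ r :=
  changeForm_algebraMap changeForm.associated_neg_proof r

theorem equivExterior_ι_mul (v : M) (x : CliffordAlgebra Q) :
    equivExterior Q (ι Q v * x) = ι 0 v * equivExterior Q x -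
      contractLeft (QuadraticMap.associated (-Q) v) (equivExterior Q x) :=
  changeForm_ι_mul changeForm.associated_neg_proof v x

theorem equivExterior_involute_mul_ι (v : M) (x : CliffordAlgebra Q) :
    equivExterior Q (involute x * ι Q v) = ι 0 v * equivExterior Q x +
      contractLeft (QuadraticMap.associated (-Q) v) (equivExterior Q x) := by
  induction x using CliffordAlgebra.left_induction with
  | algebraMap r =>
    have h : equivExterior Q (ι Q v) = ι 0 v := changeForm_ι changeForm.associated_neg_proof v
    rw [AlgHom.commutes, equivExterior_algebraMap, contractLeft_algebraMap, add_zero,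
      ← Algebra.commutes, ← Algebra.smul_def, ← Algebra.smul_def, map_smul, h]
  | add x y hx hy => simp only [map_add, add_mul, mul_add, hx, hy]; abel
  | ι_mul x u hx =>
    have anticomm (Z : CliffordAlgebra (0 : QuadraticForm R M)) :
        ι 0 u * (ι 0 v * Z) = -(ι 0 v * (ι 0 u * Z)) := by
      rw [← mul_assoc, ← mul_assoc, ← neg_mul,
        eq_neg_of_add_eq_zero_left (ExteriorAlgebra.ι_add_mul_swap u v)]
    have symm : QuadraticMap.associated (-Q) u v = QuadraticMap.associated (-Q) v u :=
      QuadraticMap.associated_isSymm R (-Q) u v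
    rw [map_mul involute, involute_ι, neg_mul, neg_mul, mul_assoc, map_neg, equivExterior_ι_mul, hx,
      equivExterior_ι_mul]
    simp only [map_add, map_sub, contractLeft_ι_mul, mul_add, mul_sub, anticomm, symm,
      contractLeft_comm (QuadraticMap.associated (-Q) u)]
    abel

variable {Q} in
/-- The wedge product `v ∧ x` of a vector with a multivector, defined by the products of `x` with
`v` on either side, whose contraction terms cancel. Iterating it from scalars produces all
multivectors of a given grade. -/
def vecWedge (v : M) (x : CliffordAlgebra Q) : CliffordAlgebra Q :=
  (⅟2 : R) • (ι Q v * x + involute x * ι Q v)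

theorem equivExterior_vecWedge (v : M) (x : CliffordAlgebra Q) :
    equivExterior Q (vecWedge v x) = ι 0 v * equivExterior Q x := by
  rw [vecWedge, map_smul, map_add, equivExterior_ι_mul, equivExterior_involute_mul_ι,
    sub_add_add_cancel, ← two_smul R, invOf_smul_smul]

/-- The multivectors of grade `n`, with the grading transported from the exterior algebra as in
`gradeProj`; unlike there, the scalars need not form a field. -/
def gradeSubmodule (n : ℕ) : Submodule R (CliffordAlgebra Q) :=
  (⋀[R]^n M).comap (equivExterior Q).toLinearMap

variable {Q}

theorem mem_gradeSubmodule {n : ℕ} {x : CliffordAlgebra Q} :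
    x ∈ gradeSubmodule Q n ↔ equivExterior Q x ∈ ⋀[R]^n M :=
  Iff.rfl

theorem symm_mem_gradeSubmodule {n : ℕ} {Z : ExteriorAlgebra R M} (hZ : Z ∈ ⋀[R]^n M) :
    (equivExterior Q).symm Z ∈ gradeSubmodule Q n := by
  rwa [mem_gradeSubmodule, LinearEquiv.apply_symm_apply]

theorem algebraMap_mem_gradeSubmodule (r : R) : algebraMap R _ r ∈ gradeSubmodule Q 0 := by
  rw [mem_gradeSubmodule, equivExterior_algebraMap]
  exact SetLike.algebraMap_mem_graded (fun n : ℕ => ⋀[R]^n M) r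

theorem vecWedge_mem_gradeSubmodule (v : M) {n : ℕ} {x : CliffordAlgebra Q}
    (hx : x ∈ gradeSubmodule Q n) :
    vecWedge v x ∈ gradeSubmodule Q (n + 1) := by
  rw [mem_gradeSubmodule, equivExterior_vecWedge]
  exact ι_mul_mem_range_ι_pow_succ v hx

theorem gradeSubmodule_induction
    {motive : ∀ n (x : CliffordAlgebra Q), x ∈ gradeSubmodule Q n → Prop}
    (algebraMap : ∀ r, motive 0 (algebraMap R _ r) (algebraMap_mem_gradeSubmodule r))
    (add : ∀ n x y hx hy, motive n x hx → motive n y hy →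
      motive n (x + y) (add_mem hx hy))
    (wedge : ∀ n v x hx, motive n x hx →
      motive (n + 1) (vecWedge v x) (vecWedge_mem_gradeSubmodule v hx))
    (n : ℕ) (x : CliffordAlgebra Q) (hx : x ∈ gradeSubmodule Q n) : motive n x hx := by
  obtain ⟨Z, rfl⟩ := (equivExterior Q).symm.surjective x
  have hZ : Z ∈ ⋀[R]^n M := by rwa [mem_gradeSubmodule, LinearEquiv.apply_symm_apply] at hx
  induction hZ using Submodule.pow_induction_on_left' with
  | algebraMap r =>
    simp only [← equivExterior_algebraMap Q, LinearEquiv.symm_apply_apply]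
    exact algebraMap r
  | add Z Z' n hmem hmem' hZ hZ' =>
    simp only [map_add]
    exact add n _ _ _ _ (hZ (symm_mem_gradeSubmodule hmem)) (hZ' (symm_mem_gradeSubmodule hmem'))
  | mem_mul _ hv n Z hmem hZ =>
    obtain ⟨v, rfl⟩ := hv
    have hwedge : (equivExterior Q).symm (ι 0 v * Z) = vecWedge v ((equivExterior Q).symm Z) := by
      rw [LinearEquiv.symm_apply_eq, equivExterior_vecWedge, LinearEquiv.apply_symm_apply]
    simp only [Nat.succ_eq_add_one, hwedge]
    exact wedge n v _ _ (hZ (symm_mem_gradeSubmodule hmem))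

theorem gradeSubmodule_le_range_ι_pow (n : ℕ) :
    gradeSubmodule Q n ≤ LinearMap.range (ι Q) ^ n := by
  intro x hx
  induction n, x, hx using gradeSubmodule_induction with
  | algebraMap r => exact pow_zero (LinearMap.range (ι Q)) ▸ Submodule.algebraMap_mem r
  | add n x y _ _ hx hy => exact add_mem hx hy
  | wedge n v x _ hx =>
    have hxv : x * ι Q v ∈ LinearMap.range (ι Q) ^ (n + 1) :=
      Submodule.mul_mem_mul hx (LinearMap.mem_range_self _ v)
    rw [vecWedge, involute_of_mem_range_ι_pow hx, smul_mul_assoc]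
    exact Submodule.smul_mem _ _
      (add_mem (ι_mul_mem_range_ι_pow_succ v hx) (Submodule.smul_mem _ _ hxv))

theorem reverse_of_mem_gradeSubmodule {n : ℕ} {x : CliffordAlgebra Q}
    (hx : x ∈ gradeSubmodule Q n) : reverse x = (-1 : R) ^ n.choose 2 • x := by
  induction n, x, hx using gradeSubmodule_induction with
  | algebraMap r => simp
  | add n x y _ _ hx hy => rw [map_add, hx, hy, smul_add]
  | wedge n v x hmem hx =>
    have hsign : (-1 : R) ^ n * (-1) ^ n = 1 := pow_mul_pow_eq_one n (by simp)
    rw [vecWedge, involute_of_mem_range_ι_pow (gradeSubmodule_le_range_ι_pow n hmem), map_smul,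
      map_add, reverse.map_mul, reverse.map_mul, reverse_ι, map_smul, hx, Nat.choose_succ_succ' n 1,
      Nat.choose_one_right, pow_add]
    simp only [smul_mul_assoc, mul_smul_comm, smul_add, smul_smul]
    rw [add_comm]
    congr 2
    · ring
    · linear_combination -⅟2 * (-1) ^ n.choose 2 * hsign

theorem ι_mul_mem_sup_gradeSubmodule (v : M) {n : ℕ} {x : CliffordAlgebra Q}
    (hx : x ∈ gradeSubmodule Q (n + 1)) :
    ι Q v * x ∈ gradeSubmodule Q (n + 2) ⊔ gradeSubmodule Q n := by
  have hwedge : (equivExterior Q).symm (ι 0 v * equivExterior Q x) ∈ gradeSubmodule Q (n + 2) :=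
    symm_mem_gradeSubmodule (ι_mul_mem_range_ι_pow_succ v hx)
  have hcontract : (equivExterior Q).symm
      (contractLeft (QuadraticMap.associated (-Q) v) (equivExterior Q x)) ∈
      gradeSubmodule Q n :=
    symm_mem_gradeSubmodule (contractLeft_mem_range_ι_pow _ hx)
  rw [← (equivExterior Q).symm_apply_apply (ι Q v * x), equivExterior_ι_mul, map_sub]
  exact sub_mem (Submodule.mem_sup_left hwedge) (Submodule.mem_sup_right hcontract)

theorem iSup_gradeSubmodule : ⨆ n, gradeSubmodule Q n = ⊤ := by
  simp only [gradeSubmodule, Submodule.comap_equiv_eq_map_symm, ← Submodule.map_iSup]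
  rw [(DirectSum.Decomposition.isInternal fun n : ℕ => ⋀[R]^n M).submodule_iSup_eq_top,
    Submodule.map_top, LinearEquiv.range]

variable (Q) in
/-- The grade-zero part `⟨x⟩₀`, as a linear functional with values in the scalars rather than in
the Clifford algebra. -/
def scalarPart : CliffordAlgebra Q →ₗ[R] R :=
  ExteriorAlgebra.algebraMapInv.toLinearMap ∘ₗ (equivExterior Q).toLinearMap

@[simp]
theorem scalarPart_algebraMap (r : R) : scalarPart Q (algebraMap R _ r) = r := by
  simp [scalarPart]

theorem scalarPart_eq_zero_of_mem_gradeSubmodule {n : ℕ} (hn : n ≠ 0) {x : CliffordAlgebra Q}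
    (hx : x ∈ gradeSubmodule Q n) : scalarPart Q x = 0 :=
  algebraMapInv_eq_zero_of_mem_exteriorPower hn hx

@[simp]
theorem scalarPart_reverse (x : CliffordAlgebra Q) :
    scalarPart Q (reverse x) = scalarPart Q x := by
  have hx : x ∈ ⨆ n, gradeSubmodule Q n := by
    rw [iSup_gradeSubmodule]; exact Submodule.mem_top
  induction hx using Submodule.iSup_induction' with
  | mem n x hx =>
    rw [reverse_of_mem_gradeSubmodule hx, map_smul]
    obtain rfl | hn := eq_or_ne n 0
    · simp
    · rw [scalarPart_eq_zero_of_mem_gradeSubmodule hn hx, smul_zero]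
  | zero => simp
  | add x y _ _ hx hy => simp only [map_add, hx, hy]

theorem scalarPart_mul_eq_zero_of_lt {m n : ℕ} (hmn : m < n) {x y : CliffordAlgebra Q}
    (hx : x ∈ LinearMap.range (ι Q) ^ m) (hy : y ∈ gradeSubmodule Q n) :
    scalarPart Q (x * y) = 0 := by
  induction hx using Submodule.pow_induction_on_right' generalizing n y with
  | algebraMap r =>
    rw [← Algebra.smul_def, map_smul,
      scalarPart_eq_zero_of_mem_gradeSubmodule (Nat.ne_of_gt hmn) hy, smul_zero]
  | add x x' m _ _ hx hx' => rw [add_mul, map_add, hx hmn hy, hx' hmn hy, add_zero]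
  | mul_mem m x _ hx _ hv =>
    obtain ⟨v, rfl⟩ := hv
    obtain ⟨n, rfl⟩ := Nat.exists_eq_succ_of_ne_zero (Nat.ne_zero_of_lt hmn)
    obtain ⟨w, hw, c, hc, hwc⟩ := Submodule.mem_sup.mp (ι_mul_mem_sup_gradeSubmodule v hy)
    rw [mul_assoc, ← hwc, mul_add, map_add, hx (by omega) hw, hx (by omega) hc, add_zero]

theorem scalarPart_mul_eq_zero_of_ne {m n : ℕ} (hmn : m ≠ n) {x y : CliffordAlgebra Q}
    (hx : x ∈ gradeSubmodule Q m) (hy : y ∈ gradeSubmodule Q n) :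
    scalarPart Q (x * y) = 0 := by
  obtain hmn | hnm := hmn.lt_or_gt
  · exact scalarPart_mul_eq_zero_of_lt hmn (gradeSubmodule_le_range_ι_pow m hx) hy
  · rw [← scalarPart_reverse, reverse.map_mul, reverse_of_mem_gradeSubmodule hx,
      reverse_of_mem_gradeSubmodule hy, smul_mul_smul_comm, map_smul,
      scalarPart_mul_eq_zero_of_lt hnm (gradeSubmodule_le_range_ι_pow n hy) hx, smul_zero]

end EquivExterior

theorem neg_one_pow_choose_two_mul {R : Type*} [Monoid R] [HasDistribNeg R] (j : ℕ) :
    (-1 : R) ^ (2 * j).choose 2 = (-1) ^ j := by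
  induction j with
  | zero => simp
  | succ j ih =>
    rw [mul_add_one, Nat.choose_succ_succ' (2 * j + 1) 1, Nat.choose_succ_succ' (2 * j) 1, pow_add,
      pow_add, ih]
    simp [pow_succ, pow_mul]

section Field

variable {K M : Type*} [Field K] [CharZero K] [Invertible (2 : K)] [AddCommGroup M] [Module K M]
  (Q : QuadraticForm K M)

theorem gradeProj_eq (l : ℕ) (x : CliffordAlgebra Q) :
    gradeProj Q l x = (equivExterior Q).symm
      (DirectSum.decompose (fun n : ℕ => ⋀[K]^n M) (equivExterior Q x) l) := by
  unfold gradeProj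
  congr! <;> exact Subsingleton.elim _ _

theorem gradeProj_mem_gradeSubmodule (l : ℕ) (x : CliffordAlgebra Q) :
    gradeProj Q l x ∈ gradeSubmodule Q l := by
  rw [gradeProj_eq, mem_gradeSubmodule, LinearEquiv.apply_symm_apply]
  exact SetLike.coe_mem _

theorem gradeProj_zero (x : CliffordAlgebra Q) :
    gradeProj Q 0 x = algebraMap K _ (scalarPart Q x) := by
  rw [gradeProj_eq, decompose_zero_eq_algebraMap, LinearEquiv.symm_apply_eq,
    equivExterior_algebraMap]
  rfl

theorem Wj_mem_gradeSubmodule (B : CliffordAlgebra Q) (j : ℕ) :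
    Wj Q B j ∈ gradeSubmodule Q (2 * j) :=
  Submodule.smul_mem _ _ (gradeProj_mem_gradeSubmodule Q _ _)

theorem reverse_Wj (B : CliffordAlgebra Q) (j : ℕ) :
    reverse (Wj Q B j) = (-1 : K) ^ j • Wj Q B j := by
  rw [reverse_of_mem_gradeSubmodule (Wj_mem_gradeSubmodule Q B j), neg_one_pow_choose_two_mul]

theorem scalarPart_Wj_mul_Wj_of_ne (B : CliffordAlgebra Q) {i j : ℕ} (hij : i ≠ j) :
    scalarPart Q (Wj Q B i * Wj Q B j) = 0 :=
  scalarPart_mul_eq_zero_of_ne (by omega) (Wj_mem_gradeSubmodule Q B i)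
    (Wj_mem_gradeSubmodule Q B j)

theorem scalarPart_Mpoly_mul_reverse (B : CliffordAlgebra Q) (k : ℕ) (μ : K) :
    scalarPart Q (Mpoly Q B k μ * reverse (Mpoly Q B k μ)) =
      ∑ j ∈ Finset.range (k + 1),
        (-1) ^ j * (scalarPart Q (Wj Q B j * Wj Q B j) * (μ ^ 2) ^ (k - j)) := by
  rw [Mpoly, map_sum, Finset.sum_mul_sum, map_sum]
  refine Finset.sum_congr rfl fun i hi => ?_
  simp only [map_sum, map_smul, reverse_Wj, smul_mul_smul_comm, smul_smul, smul_eq_mul]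
  rw [Finset.sum_eq_single_of_mem i hi fun j _ hji => by
    rw [scalarPart_Wj_mul_Wj_of_ne Q B hji.symm, mul_zero]]
  rw [← neg_sq μ, ← pow_mul]
  ring

end Field

theorem gradeProj_zero_algebraMap {K M : Type*} [Field K] [CharZero K] [AddCommGroup M]
    [Module K M] (Q : QuadraticForm K M) (r : K) :
    gradeProj Q 0 (algebraMap K _ r) = algebraMap K _ r := by
  let _ : Invertible (2 : K) := invertibleOfNonzero two_ne_zero
  rw [gradeProj_zero, scalarPart_algebraMap]

section Polynomial

open Polynomial

theorem coeff_sum_neg_one_pow_mul_X_pow {R : Type*} [CommRing R] (c : ℕ → R) {n j : ℕ}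
    (hj : j ≤ n) :
    (∑ i ∈ Finset.range (n + 1), (-1) ^ i * (C (c i) * X ^ (n - i)) : R[X]).coeff (n - j) =
      (-1) ^ j * c j := by
  have hterm (i : ℕ) : (-1) ^ i * (C (c i) * X ^ (n - i)) = C ((-1) ^ i * c i) * X ^ (n - i) := by
    simp [mul_assoc]
  simp only [hterm, finsetSum_coeff, coeff_C_mul_X_pow]
  rw [Finset.sum_eq_single_of_mem j (Finset.mem_range_succ_iff.mpr hj), if_pos rfl]
  intro i hi hij
  rw [Finset.mem_range_succ_iff] at hi
  exact if_neg (by omega)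

theorem eq_esymm_of_sum_eq_prod {R : Type*} [CommRing R] [IsDomain R] [Infinite R]
    (s : Multiset R) (c : ℕ → R)
    (h : ∀ μ : R, ∑ j ∈ Finset.range (s.card + 1), (-1) ^ j * (c j * (μ ^ 2) ^ (s.card - j)) =
      (s.map fun ν => μ ^ 2 - ν).prod)
    {j : ℕ} (hj : j ≤ s.card) : c j = s.esymm j := by
  have hp : ∑ i ∈ Finset.range (s.card + 1), (-1) ^ i * (C (c i) * X ^ (s.card - i)) =
      (s.map fun ν => X - C ν).prod := by
    refine expand_injective two_pos (Polynomial.funext fun μ => ?_)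
    simp only [expand_eval]
    simpa [eval_finsetSum, eval_multiset_prod] using h μ
  have hcoeff := congrArg (coeff · (s.card - j)) hp
  simp only [Multiset.prod_X_sub_X_eq_sum_esymm, coeff_sum_neg_one_pow_mul_X_pow _ hj] at hcoeff
  exact mul_left_cancel₀ (pow_ne_zero j (neg_ne_zero.mpr one_ne_zero)) hcoeff

end Polynomial

end GeometricAlgebra

end

open GeometricAlgebra CliffordAlgebra in
theorem Wj_sq_scalar_eq_esymm_general {K M : Type*} [Field K] [CharZero K] [AddCommGroup M]
    [Module K M] (Q : QuadraticForm K M) (B : CliffordAlgebra Q) (k : ℕ) (ν : Fin k → K)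
    (hroots : ∀ μ : K, gradeProj Q 0 (Mpoly Q B k μ * reverse (Mpoly Q B k μ)) =
      algebraMap K (CliffordAlgebra Q) (∏ i, (μ ^ 2 - ν i)))
    (j : ℕ) (hj : j ≤ k) :
    gradeProj Q 0 (Wj Q B j * Wj Q B j) =
      algebraMap K (CliffordAlgebra Q) (∑ A ∈ Finset.powersetCard j Finset.univ, ∏ i ∈ A, ν i) := by
  let _ : Invertible (2 : K) := invertibleOfNonzero two_ne_zero
  have hprod (μ : K) := congrArg (scalarPart Q) (hroots μ)
  simp only [gradeProj_zero, scalarPart_algebraMap, scalarPart_Mpoly_mul_reverse] at hprod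
  rw [gradeProj_zero, ← Finset.esymm_map_val]
  congr 1
  refine eq_esymm_of_sum_eq_prod (Finset.univ.val.map ν)
    (fun j => scalarPart Q (Wj Q B j * Wj Q B j)) (fun μ => ?_) (by simpa)
  simpa only [Multiset.card_map, Finset.card_val, Finset.card_univ, Fintype.card_fin,
    Multiset.map_map, Function.comp_def, Finset.prod_map_val] using hprod μ

open CliffordAlgebra in
/-- if `±μ₁, …, ±μ_k ∈ ℂ` are the roots (with multiplicity) of the
characteristic polynomial `P_{2k}(μ) = M_μ M̃_μ` of a bivector `B` of effective dimension `2k`,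
then `⟨W_j²⟩₀ = e_j(μ₁², …, μ_k²)` for all `1 ≤ j ≤ k`. -/
theorem Wj_sq_scalar_eq_esymm (p q r : ℕ) (B : CliffordAlgebra (sigQ p q r))
    (hB : IsGrade (sigQ p q r) 2 B) (k : ℕ) (hk : HasEffDim (sigQ p q r) B k)
    (μs : Fin k → ℂ)
    (hroots : ∀ μ : ℂ,
      Mpoly (sigQc p q r) (toC p q r B) k μ * reverse (Mpoly (sigQc p q r) (toC p q r B) k μ)
        = algebraMap ℂ (CliffordAlgebra (sigQc p q r)) (∏ i : Fin k, (μ ^ 2 - μs i ^ 2))) :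
    ∀ j : ℕ, 1 ≤ j → j ≤ k →
      gradeProj (sigQc p q r) 0 (Wj (sigQc p q r) (toC p q r B) j * Wj (sigQc p q r) (toC p q r B) j)
        = algebraMap ℂ (CliffordAlgebra (sigQc p q r))
            (∑ A ∈ Finset.powersetCard j (Finset.univ : Finset (Fin k)), ∏ i ∈ A, μs i ^ 2) := by
  exact fun j _ hj => Wj_sq_scalar_eq_esymm_general _ _ k _
    (fun μ => by rw [hroots, GeometricAlgebra.gradeProj_zero_algebraMap]) j hj
end

section
/- Let B₁ and B₂ be commuting bivectors in ℝ_{p,q,r}, i.e. B₁ × B₂ = 0, and let B := B₁ + B₂. Then for every a ≥ 0 one has W_a^{(B)} = Σ_{j=0}^a W_j^{(B₁)} ∧ W_{a−j}^{(B₂)}, where W_j^{(C)} := (1/j!)⟨C^j⟩_{2j} for a bivector C. -/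
/-!
The product of an element of filtration degree `≤ m` and one of degree `≤ n` has, in degree
`m + n`, the exterior product of their top components: the identification with the exterior
algebra corrects left multiplication by a vector only by a contraction, which lies in lower
filtration. Hence `W_j` of a bivector is, inside the exterior algebra, its `j`-th divided power.
Elements of `⋀²` are central there, so the claim is the binomial theorem for divided powers.
-/

section Filtration

open CliffordAlgebra

variable {R V : Type*} [CommRing R] [AddCommGroup V] [Module R V] {Q Q' : QuadraticForm R V}

/-- The standard filtration of a Clifford algebra, whose `n`-th term is spanned by the products
of at most `n` vectors. It is encoded as a power so that Mathlib's submodule arithmetic applies. -/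
def cliffordFiltration (Q : QuadraticForm R V) (n : ℕ) : Submodule R (CliffordAlgebra Q) :=
  (1 ⊔ LinearMap.range (ι Q)) ^ n

theorem cliffordFiltration_mono : Monotone (cliffordFiltration Q) :=
  pow_right_monotone le_sup_left

theorem algebraMap_mem_cliffordFiltration_zero (r : R) :
    algebraMap R (CliffordAlgebra Q) r ∈ cliffordFiltration Q 0 := by
  rw [cliffordFiltration, pow_zero]
  exact Submodule.algebraMap_mem r

theorem mul_mem_cliffordFiltration {m n : ℕ} {x y : CliffordAlgebra Q}
    (hx : x ∈ cliffordFiltration Q m) (hy : y ∈ cliffordFiltration Q n) :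
    x * y ∈ cliffordFiltration Q (m + n) := by
  rw [cliffordFiltration, pow_add]
  exact Submodule.mul_mem_mul hx hy

theorem pow_mem_cliffordFiltration {m : ℕ} {x : CliffordAlgebra Q}
    (hx : x ∈ cliffordFiltration Q m) (j : ℕ) : x ^ j ∈ cliffordFiltration Q (m * j) := by
  rw [cliffordFiltration, pow_mul]
  exact Submodule.pow_mem_pow _ hx j

theorem ι_mul_mem_cliffordFiltration {n : ℕ} {x : CliffordAlgebra Q} (v : V)
    (hx : x ∈ cliffordFiltration Q n) : ι Q v * x ∈ cliffordFiltration Q (n + 1) := by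
  rw [cliffordFiltration, pow_succ']
  exact Submodule.mul_mem_mul (Submodule.mem_sup_right ⟨v, rfl⟩) hx

@[elab_as_elim]
theorem cliffordFiltration_induction
    {motive : ∀ (n : ℕ) (x : CliffordAlgebra Q), x ∈ cliffordFiltration Q n → Prop}
    (algebraMap : ∀ r : R, motive 0 (algebraMap R _ r) (algebraMap_mem_cliffordFiltration_zero r))
    (add : ∀ n x y hx hy, motive n x hx → motive n y hy → motive n (x + y) (add_mem hx hy))
    (smul : ∀ n (r : R) x hx, motive n x hx →
      motive (n + 1) (r • x) (cliffordFiltration_mono n.le_succ (Submodule.smul_mem _ r hx)))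
    (ι_mul : ∀ n v x hx, motive n x hx →
      motive (n + 1) (ι Q v * x) (ι_mul_mem_cliffordFiltration v hx))
    {n : ℕ} {x : CliffordAlgebra Q} (hx : x ∈ cliffordFiltration Q n) : motive n x hx := by
  refine Submodule.pow_induction_on_left' _ (C := motive) algebraMap
    (fun x y n hx hy => add n x y hx hy) (fun m hm n x hx ih => ?_) hx
  obtain ⟨s, hs, w, ⟨v, rfl⟩, rfl⟩ := Submodule.mem_sup.mp hm
  obtain ⟨r, rfl⟩ := Submodule.mem_one.mp hs
  simp only [add_mul, ← Algebra.smul_def]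
  exact add _ _ _ _ _ (smul n r x hx ih) (ι_mul n v x hx ih)

theorem contractLeft_mem_cliffordFiltration (d : Module.Dual R V) {n : ℕ}
    {x : CliffordAlgebra Q} (hx : x ∈ cliffordFiltration Q n) :
    contractLeft d x ∈ cliffordFiltration Q n := by
  induction hx using cliffordFiltration_induction with
  | algebraMap r =>
    rw [contractLeft_algebraMap]
    exact zero_mem _
  | add n x y _ _ hx hy =>
    rw [map_add]
    exact add_mem hx hy
  | smul n r x _ ih =>
    rw [map_smul]
    exact Submodule.smul_mem _ r (cliffordFiltration_mono n.le_succ ih)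
  | ι_mul n v x hx ih =>
    rw [contractLeft_ι_mul]
    exact sub_mem (Submodule.smul_mem _ _ (cliffordFiltration_mono n.le_succ hx))
      (ι_mul_mem_cliffordFiltration v ih)

theorem changeForm_mem_cliffordFiltration {B : LinearMap.BilinForm R V}
    (h : B.toQuadraticMap = Q' - Q) {n : ℕ} {x : CliffordAlgebra Q}
    (hx : x ∈ cliffordFiltration Q n) : changeForm h x ∈ cliffordFiltration Q' n := by
  induction hx using cliffordFiltration_induction with
  | algebraMap r =>
    rw [changeForm_algebraMap]
    exact algebraMap_mem_cliffordFiltration_zero r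
  | add n x y _ _ hx hy =>
    rw [map_add]
    exact add_mem hx hy
  | smul n r x _ ih =>
    rw [map_smul]
    exact Submodule.smul_mem _ r (cliffordFiltration_mono n.le_succ ih)
  | ι_mul n v x _ ih =>
    rw [changeForm_ι_mul]
    exact sub_mem (ι_mul_mem_cliffordFiltration v ih)
      (cliffordFiltration_mono n.le_succ (contractLeft_mem_cliffordFiltration _ ih))

end Filtration

section ExteriorAlgebra

variable {R V : Type*} [CommRing R] [AddCommGroup V] [Module R V]

theorem exteriorPower_le_cliffordFiltration (n : ℕ) :
    ⋀[R]^n V ≤ cliffordFiltration (0 : QuadraticForm R V) n :=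
  pow_le_pow_left' le_sup_right n

theorem algebraMap_mem_exteriorPower_zero (r : R) :
    algebraMap R (ExteriorAlgebra R V) r ∈ ⋀[R]^0 V := by
  rw [ExteriorAlgebra.exteriorPower, pow_zero]
  exact Submodule.algebraMap_mem r

theorem exteriorProj_ι_mul (n : ℕ) (v : V) (x : ExteriorAlgebra R V) :
    GradedAlgebra.proj (fun i : ℕ => ⋀[R]^i V) (n + 1) (ExteriorAlgebra.ι R v * x) =
      ExteriorAlgebra.ι R v * GradedAlgebra.proj (fun i : ℕ => ⋀[R]^i V) n x := by
  have hv : ExteriorAlgebra.ι R v ∈ ⋀[R]^1 V := by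
    rw [ExteriorAlgebra.exteriorPower, pow_one]
    exact ⟨v, rfl⟩
  rw [add_comm n 1]
  exact DirectSum.coe_decompose_mul_add_of_left_mem (fun i : ℕ => ⋀[R]^i V) hv

theorem exteriorProj_eq_zero_of_mem_cliffordFiltration {n k : ℕ} {x : ExteriorAlgebra R V}
    (hx : x ∈ cliffordFiltration (0 : QuadraticForm R V) n) (hnk : n < k) :
    GradedAlgebra.proj (fun i : ℕ => ⋀[R]^i V) k x = 0 := by
  induction hx using cliffordFiltration_induction generalizing k with
  | algebraMap r =>
    exact DirectSum.decompose_of_mem_ne (fun i : ℕ => ⋀[R]^i V)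
      (algebraMap_mem_exteriorPower_zero r) hnk.ne
  | add n x y _ _ hx hy => rw [map_add, hx hnk, hy hnk, add_zero]
  | smul n r x _ ih => rw [map_smul, ih (Nat.lt_of_succ_lt hnk), smul_zero]
  | ι_mul n v x _ ih =>
    obtain ⟨k, rfl⟩ := Nat.exists_eq_succ_of_ne_zero (Nat.ne_zero_of_lt hnk)
    refine (exteriorProj_ι_mul k v x).trans ?_
    rw [ih (Nat.lt_of_succ_lt_succ hnk), mul_zero]

theorem exteriorPower_two_le_center :
    ⋀[R]^2 V ≤ Subalgebra.toSubmodule (Subalgebra.center R (ExteriorAlgebra R V)) := by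
  rw [ExteriorAlgebra.exteriorPower, pow_two, Submodule.mul_le]
  rintro _ ⟨u, rfl⟩ _ ⟨v, rfl⟩
  have anticomm (a b : V) : ExteriorAlgebra.ι R a * ExteriorAlgebra.ι R b =
      -(ExteriorAlgebra.ι R b * ExteriorAlgebra.ι R a) :=
    eq_neg_of_add_eq_zero_left (ExteriorAlgebra.ι_add_mul_swap a b)
  refine (Subalgebra.mem_center_iff (R := R)).mpr fun x => ?_
  induction x using ExteriorAlgebra.induction with
  | algebraMap r => exact Algebra.commutes r _
  | ι w => rw [← mul_assoc, anticomm w u, neg_mul, mul_assoc, anticomm w v, mul_neg, neg_neg,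
      mul_assoc]
  | mul x y hx hy => rw [mul_assoc, hy, ← mul_assoc, hx, mul_assoc]
  | add x y hx hy => rw [add_mul, mul_add, hx, hy]

end ExteriorAlgebra

section ExteriorComponent

open CliffordAlgebra

variable {R V : Type*} [CommRing R] [Invertible (2 : R)] [AddCommGroup V] [Module R V]
  {Q : QuadraticForm R V}

theorem equivExterior_algebraMap (r : R) :
    equivExterior Q (algebraMap R _ r) = algebraMap R _ r :=
  changeForm_algebraMap changeForm.associated_neg_proof r

theorem equivExterior_ι_mul (v : V) (x : CliffordAlgebra Q) :
    equivExterior Q (ι Q v * x) = ExteriorAlgebra.ι R v * equivExterior Q x -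
      contractLeft (QuadraticMap.associated (R := R) (-Q) v) (equivExterior Q x) :=
  changeForm_ι_mul changeForm.associated_neg_proof v x

theorem equivExterior_mem_cliffordFiltration {n : ℕ} {x : CliffordAlgebra Q}
    (hx : x ∈ cliffordFiltration Q n) :
    equivExterior Q x ∈ cliffordFiltration (0 : QuadraticForm R V) n :=
  changeForm_mem_cliffordFiltration changeForm.associated_neg_proof hx

theorem equivExterior_symm_mem_cliffordFiltration {n : ℕ} {u : ExteriorAlgebra R V}
    (hu : u ∈ ⋀[R]^n V) : (equivExterior Q).symm u ∈ cliffordFiltration Q n :=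
  changeForm_mem_cliffordFiltration (changeForm.neg_proof changeForm.associated_neg_proof)
    (exteriorPower_le_cliffordFiltration n hu)

/-- The degree-`n` component of a Clifford algebra element, taken in the exterior algebra. On the
`n`-th term of `cliffordFiltration` this is the symbol map to the associated graded algebra. -/
def exteriorComponent (Q : QuadraticForm R V) (n : ℕ) :
    CliffordAlgebra Q →ₗ[R] ExteriorAlgebra R V :=
  GradedAlgebra.proj (fun i : ℕ => ⋀[R]^i V) n ∘ₗ (equivExterior Q).toLinearMap

theorem exteriorComponent_mem (n : ℕ) (x : CliffordAlgebra Q) :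
    exteriorComponent Q n x ∈ ⋀[R]^n V :=
  SetLike.coe_mem _

theorem exteriorComponent_algebraMap_zero (r : R) :
    exteriorComponent Q 0 (algebraMap R _ r) = algebraMap R _ r := by
  rw [exteriorComponent, LinearMap.comp_apply, LinearEquiv.coe_coe, equivExterior_algebraMap]
  exact DirectSum.decompose_of_mem_same (fun i : ℕ => ⋀[R]^i V)
    (algebraMap_mem_exteriorPower_zero r)

theorem exteriorComponent_eq_zero_of_lt {n k : ℕ} {x : CliffordAlgebra Q}
    (hx : x ∈ cliffordFiltration Q n) (hnk : n < k) : exteriorComponent Q k x = 0 :=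
  exteriorProj_eq_zero_of_mem_cliffordFiltration (equivExterior_mem_cliffordFiltration hx) hnk

theorem exteriorComponent_ι_mul {n : ℕ} {x : CliffordAlgebra Q} (v : V)
    (hx : x ∈ cliffordFiltration Q n) :
    exteriorComponent Q (n + 1) (ι Q v * x) = ExteriorAlgebra.ι R v * exteriorComponent Q n x := by
  have h_contract := exteriorProj_eq_zero_of_mem_cliffordFiltration
    (contractLeft_mem_cliffordFiltration (QuadraticMap.associated (R := R) (-Q) v)
      (equivExterior_mem_cliffordFiltration hx)) n.lt_succ_self
  simp only [exteriorComponent, LinearMap.comp_apply, LinearEquiv.coe_coe]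
  rw [equivExterior_ι_mul, map_sub, h_contract, sub_zero, exteriorProj_ι_mul]

theorem exteriorComponent_mul {m n : ℕ} {x y : CliffordAlgebra Q}
    (hx : x ∈ cliffordFiltration Q m) (hy : y ∈ cliffordFiltration Q n) :
    exteriorComponent Q (m + n) (x * y) = exteriorComponent Q m x * exteriorComponent Q n y := by
  induction hx using cliffordFiltration_induction with
  | algebraMap r =>
    rw [exteriorComponent_algebraMap_zero, zero_add, ← Algebra.smul_def, ← Algebra.smul_def,
      map_smul]
  | add m x x' _ _ hx hx' => rw [add_mul, map_add, map_add, hx, hx', add_mul]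
  | smul m r x hx _ =>
    have hxy := mul_mem_cliffordFiltration hx hy
    rw [smul_mul_assoc, map_smul, map_smul, exteriorComponent_eq_zero_of_lt hxy (by lia),
      exteriorComponent_eq_zero_of_lt hx m.lt_succ_self, smul_zero, zero_mul]
  | ι_mul m v x hx ih =>
    rw [mul_assoc, add_right_comm,
      exteriorComponent_ι_mul v (mul_mem_cliffordFiltration hx hy), ih,
      exteriorComponent_ι_mul v hx, mul_assoc]

theorem exteriorComponent_pow {m : ℕ} {x : CliffordAlgebra Q} (hx : x ∈ cliffordFiltration Q m)
    (j : ℕ) : exteriorComponent Q (m * j) (x ^ j) = exteriorComponent Q m x ^ j := by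
  induction j with
  | zero => simpa only [map_one, mul_zero, pow_zero] using
      exteriorComponent_algebraMap_zero (Q := Q) 1
  | succ j ih =>
    rw [pow_succ, mul_add_one, exteriorComponent_mul (pow_mem_cliffordFiltration hx j) hx, ih,
      pow_succ]

theorem exteriorComponent_equivExterior_symm {n : ℕ} {u : ExteriorAlgebra R V}
    (hu : u ∈ ⋀[R]^n V) : exteriorComponent Q n ((equivExterior Q).symm u) = u := by
  rw [exteriorComponent, LinearMap.comp_apply, LinearEquiv.coe_coe, LinearEquiv.apply_symm_apply]
  exact DirectSum.decompose_of_mem_same (fun i : ℕ => ⋀[R]^i V) hu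

end ExteriorComponent

theorem inv_factorial_smul_add_pow {K A : Type*} [Field K] [CharZero K] [Ring A]
    [Algebra K A] {x y : A} (h : Commute x y) (a : ℕ) :
    (a.factorial : K)⁻¹ • (x + y) ^ a = ∑ j ∈ Finset.range (a + 1),
      ((j.factorial : K)⁻¹ • x ^ j) * (((a - j).factorial : K)⁻¹ • y ^ (a - j)) := by
  rw [h.add_pow, Finset.smul_sum]
  refine Finset.sum_congr rfl fun j hj => ?_
  have hja : j ≤ a := Nat.lt_succ_iff.mp (Finset.mem_range.mp hj)
  have h_choose : (a.factorial : K)⁻¹ * a.choose j =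
      (j.factorial : K)⁻¹ * ((a - j).factorial : K)⁻¹ := by
    rw [Nat.cast_choose K hja, ← mul_inv, mul_div_assoc', inv_mul_cancel₀ ?_, one_div]
    exact Nat.cast_ne_zero.mpr a.factorial_ne_zero
  rw [smul_mul_smul_comm, ← h_choose, ← nsmul_eq_mul', ← Nat.cast_smul_eq_nsmul K, smul_smul]

section Grade

open CliffordAlgebra

variable {K M : Type*} [Field K] [CharZero K] [AddCommGroup M] [Module K M]
  {Q : QuadraticForm K M}

theorem gradeProj_eq_equivExterior_symm [inst : Invertible (2 : K)] (ℓ : ℕ)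
    (x : CliffordAlgebra Q) :
    gradeProj Q ℓ x = (equivExterior Q).symm (exteriorComponent Q ℓ x) := by
  obtain rfl : inst = invertibleOfNonzero two_ne_zero := Subsingleton.elim _ _
  rfl

theorem IsGrade.mem_cliffordFiltration {ℓ : ℕ} {x : CliffordAlgebra Q} (hx : IsGrade Q ℓ x) :
    x ∈ cliffordFiltration Q ℓ := by
  let _ : Invertible (2 : K) := invertibleOfNonzero two_ne_zero
  rw [← hx, gradeProj_eq_equivExterior_symm]
  exact equivExterior_symm_mem_cliffordFiltration (exteriorComponent_mem ℓ x)

theorem gradeProj_equivExterior_symm_mul [Invertible (2 : K)] {m n : ℕ}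
    {u w : ExteriorAlgebra K M} (hu : u ∈ ⋀[K]^m M) (hw : w ∈ ⋀[K]^n M) :
    gradeProj Q (m + n) ((equivExterior Q).symm u * (equivExterior Q).symm w) =
      (equivExterior Q).symm (u * w) := by
  rw [gradeProj_eq_equivExterior_symm,
    exteriorComponent_mul (equivExterior_symm_mem_cliffordFiltration hu)
      (equivExterior_symm_mem_cliffordFiltration hw),
    exteriorComponent_equivExterior_symm hu, exteriorComponent_equivExterior_symm hw]

theorem Wj_eq_equivExterior_symm [Invertible (2 : K)] {B : CliffordAlgebra Q}
    (hB : B ∈ cliffordFiltration Q 2) (j : ℕ) :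
    Wj Q B j =
      (equivExterior Q).symm ((j.factorial : K)⁻¹ • exteriorComponent Q 2 B ^ j) := by
  rw [Wj, gradeProj_eq_equivExterior_symm, exteriorComponent_pow hB, map_smul]

theorem Wj_sum_of_commuting_general {B₁ B₂ : CliffordAlgebra Q}
    (hB₁ : B₁ ∈ cliffordFiltration Q 2) (hB₂ : B₂ ∈ cliffordFiltration Q 2) (a : ℕ) :
    Wj Q (B₁ + B₂) a = ∑ j ∈ Finset.range (a + 1),
      gradeProj Q (2 * j + 2 * (a - j)) (Wj Q B₁ j * Wj Q B₂ (a - j)) := by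
  let _ : Invertible (2 : K) := invertibleOfNonzero two_ne_zero
  have h_mem (B : CliffordAlgebra Q) (j : ℕ) :
      (j.factorial : K)⁻¹ • exteriorComponent Q 2 B ^ j ∈ ⋀[K]^(2 * j) M := by
    rw [ExteriorAlgebra.exteriorPower, pow_mul]
    exact Submodule.smul_mem _ _ (Submodule.pow_mem_pow _ (exteriorComponent_mem 2 B) j)
  have h_comm : Commute (exteriorComponent Q 2 B₁) (exteriorComponent Q 2 B₂) :=
    (Subalgebra.mem_center_iff (R := K)).mp
      (exteriorPower_two_le_center (exteriorComponent_mem 2 B₂)) _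
  rw [Wj_eq_equivExterior_symm (add_mem hB₁ hB₂), map_add, inv_factorial_smul_add_pow h_comm,
    map_sum]
  refine Finset.sum_congr rfl fun j _ => ?_
  rw [Wj_eq_equivExterior_symm hB₁, Wj_eq_equivExterior_symm hB₂,
    gradeProj_equivExterior_symm_mul (h_mem B₁ j) (h_mem B₂ (a - j))]

end Grade

/-- for commuting bivectors `B₁, B₂` (`B₁ × B₂ = 0`) and `B := B₁ + B₂`, one has
`W_a^{(B)} = Σ_{j=0}^a W_j^{(B₁)} ∧ W_{a-j}^{(B₂)}` for every `a ≥ 0`, where the wedge of the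
grade-`2j` and grade-`2(a-j)` elements is the grade-`(2j + 2(a-j))` part of their product. -/
theorem Wj_sum_of_commuting (p q r : ℕ) (B₁ B₂ : CliffordAlgebra (sigQ p q r))
    (hB₁ : IsGrade (sigQ p q r) 2 B₁) (hB₂ : IsGrade (sigQ p q r) 2 B₂)
    (hcomm : cprod B₁ B₂ = 0) :
    ∀ a : ℕ, Wj (sigQ p q r) (B₁ + B₂) a
      = ∑ j ∈ Finset.range (a + 1),
          gradeProj (sigQ p q r) (2 * j + 2 * (a - j))
            (Wj (sigQ p q r) B₁ j * Wj (sigQ p q r) B₂ (a - j)) :=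
  Wj_sum_of_commuting_general hB₁.mem_cliffordFiltration hB₂.mem_cliffordFiltration
end
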